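/- arXiv:1601.02717 — 4 statements merged into one kernel-verified Lean document; each statement's English description precedes it below -/
import Mathlib

section
/- Let u ∈ L²(Ω̄) and let ε satisfy 0 ≤ ε < 1. If |∫_{Ω_I} u(x) dx| ≤ ε·|Ω_I|^{1/2}·‖u‖_{L²(Ω_I)}, then |Ω̄|^{-1/2}·|∫_{Ω̄} u(x) dx| ≤ (√(1−ϱ) + √ϱ·ε)·‖u‖_{L²(Ω̄)}, where ϱ = |Ω_I|/|Ω̄|. -/
open MeasureTheory

/-- The `L²` norm of `u` over the set `D`. -/
noncomputable def l2norm {n : ℕ} (D : Set (EuclideanSpace ℝ (Fin n)))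
    (u : EuclideanSpace ℝ (Fin n) → ℝ) : ℝ :=
  Real.sqrt (∫ x in D, u x ^ 2)

/-
On `Ω`, Hölder's inequality bounds the integral by `|Ω|^(1/2) ‖u‖`; on `Ω_I`, the hypothesis
improves this by the factor `ε`. Both local norms are at most the norm over the union, so dividing
the sum by `|Ω̄|^(1/2)` gives the claim, since `|Ω| / |Ω̄| = 1 - ϱ`.
-/

section

variable {α E : Type*} [MeasurableSpace α] {μ : Measure α} [NormedAddCommGroup E]
  {p : ENNReal} {u : α → E} {s t : Set α}

theorem lpNorm_restrict_le_of_subset (hst : s ⊆ t) (hu : MemLp u p (μ.restrict t)) :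
    lpNorm u p (μ.restrict s) ≤ lpNorm u p (μ.restrict t) := by
  have hμ : μ.restrict s ≤ μ.restrict t := Measure.restrict_mono_set μ hst
  rw [← toReal_eLpNorm hu.aestronglyMeasurable,
    ← toReal_eLpNorm (hu.mono_measure hμ).aestronglyMeasurable]
  exact ENNReal.toReal_mono hu.eLpNorm_ne_top (eLpNorm_mono_measure u hμ)

theorem measureReal_div_measureReal_union (hdisj : Disjoint s t) (ht : MeasurableSet t)
    (hs_fin : μ s ≠ ⊤) (ht_fin : μ t ≠ ⊤) (hpos : 0 < μ (s ∪ t)) :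
    μ.real s / μ.real (s ∪ t) = 1 - μ.real t / μ.real (s ∪ t) := by
  have hne : μ.real (s ∪ t) ≠ 0 :=
    (ENNReal.toReal_pos hpos.ne' (measure_union_ne_top hs_fin ht_fin)).ne'
  rw [eq_sub_iff_add_eq, ← add_div, ← measureReal_union hdisj ht hs_fin ht_fin, div_self hne]

variable [NormedSpace ℝ E]

theorem norm_integral_le_measureReal_univ_rpow_mul_lpNorm [IsFiniteMeasure μ] (hp : 1 ≤ p)
    (hu : MemLp u p μ) :
    ‖∫ x, u x ∂μ‖ ≤ μ.real Set.univ ^ (1 - p.toReal⁻¹) * lpNorm u p μ := by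
  have h_exp : 0 ≤ 1 - p.toReal⁻¹ := by
    rcases eq_or_ne p ⊤ with rfl | hp_top
    · simp
    · exact sub_nonneg.2 (inv_le_one_of_one_le₀ (by simpa using ENNReal.toReal_mono hp_top hp))
  have h_holder : eLpNorm u 1 μ ≤ eLpNorm u p μ * μ Set.univ ^ (1 - p.toReal⁻¹) := by
    simpa using eLpNorm_le_eLpNorm_mul_rpow_measure_univ hp hu.aestronglyMeasurable
  calc
    ‖∫ x, u x ∂μ‖ ≤ ∫ x, ‖u x‖ ∂μ := norm_integral_le_integral_norm u
    _ = (eLpNorm u 1 μ).toReal := by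
      rw [toReal_eLpNorm hu.aestronglyMeasurable,
        lpNorm_one_eq_integral_norm hu.aestronglyMeasurable]
    _ ≤ (eLpNorm u p μ * μ Set.univ ^ (1 - p.toReal⁻¹)).toReal :=
      ENNReal.toReal_mono (ENNReal.mul_ne_top hu.eLpNorm_ne_top
        (ENNReal.rpow_ne_top_of_nonneg h_exp (measure_ne_top μ _))) h_holder
    _ = μ.real Set.univ ^ (1 - p.toReal⁻¹) * lpNorm u p μ := by
      rw [ENNReal.toReal_mul, ← ENNReal.toReal_rpow, toReal_eLpNorm hu.aestronglyMeasurable,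
        mul_comm, measureReal_def]

theorem norm_setIntegral_le_measureReal_rpow_mul_lpNorm (hs_fin : μ s ≠ ⊤) (hp : 1 ≤ p)
    (hu : MemLp u p (μ.restrict s)) :
    ‖∫ x in s, u x ∂μ‖ ≤ μ.real s ^ (1 - p.toReal⁻¹) * lpNorm u p (μ.restrict s) := by
  have : IsFiniteMeasure (μ.restrict s) := isFiniteMeasure_restrict.2 hs_fin
  simpa only [measureReal_restrict_apply_univ] using
    norm_integral_le_measureReal_univ_rpow_mul_lpNorm hp hu

theorem norm_setIntegral_union_le_of_norm_setIntegral_le (hdisj : Disjoint s t)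
    (ht : MeasurableSet t) (hs_fin : μ s ≠ ⊤) (ht_fin : μ t ≠ ⊤) (hp : 1 ≤ p)
    (hu : MemLp u p (μ.restrict (s ∪ t))) {ε : ℝ} (hε : 0 ≤ ε)
    (hbound : ‖∫ x in t, u x ∂μ‖ ≤
      ε * μ.real t ^ (1 - p.toReal⁻¹) * lpNorm u p (μ.restrict t)) :
    ‖∫ x in s ∪ t, u x ∂μ‖ ≤
      (μ.real s ^ (1 - p.toReal⁻¹) + μ.real t ^ (1 - p.toReal⁻¹) * ε) *
        lpNorm u p (μ.restrict (s ∪ t)) := by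
  have : IsFiniteMeasure (μ.restrict (s ∪ t)) :=
    isFiniteMeasure_restrict.2 (measure_union_ne_top hs_fin ht_fin)
  have hu_int : IntegrableOn u (s ∪ t) μ := hu.integrable hp
  have hu_s : MemLp u p (μ.restrict s) :=
    hu.mono_measure (Measure.restrict_mono_set μ Set.subset_union_left)
  calc
    ‖∫ x in s ∪ t, u x ∂μ‖ = ‖(∫ x in s, u x ∂μ) + ∫ x in t, u x ∂μ‖ := by
      rw [setIntegral_union hdisj ht hu_int.left_of_union hu_int.right_of_union]
    _ ≤ ‖∫ x in s, u x ∂μ‖ + ‖∫ x in t, u x ∂μ‖ := norm_add_le _ _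
    _ ≤ μ.real s ^ (1 - p.toReal⁻¹) * lpNorm u p (μ.restrict s) +
        ε * μ.real t ^ (1 - p.toReal⁻¹) * lpNorm u p (μ.restrict t) :=
      add_le_add (norm_setIntegral_le_measureReal_rpow_mul_lpNorm hs_fin hp hu_s) hbound
    _ ≤ μ.real s ^ (1 - p.toReal⁻¹) * lpNorm u p (μ.restrict (s ∪ t)) +
        ε * μ.real t ^ (1 - p.toReal⁻¹) * lpNorm u p (μ.restrict (s ∪ t)) := by
      gcongr
      · exact lpNorm_restrict_le_of_subset Set.subset_union_left hu
      · exact lpNorm_restrict_le_of_subset Set.subset_union_right hu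
    _ = (μ.real s ^ (1 - p.toReal⁻¹) + μ.real t ^ (1 - p.toReal⁻¹) * ε) *
        lpNorm u p (μ.restrict (s ∪ t)) := by ring

-- For `p = ∞` the exponent `1 - p.toReal⁻¹` is `1`, as it should be, because `∞.toReal⁻¹ = 0`.
theorem stmt0_general [CompleteSpace E] (hdisj : Disjoint s t) (ht : MeasurableSet t)
    (hs_fin : μ s ≠ ⊤) (ht_fin : μ t ≠ ⊤) (hpos : 0 < μ (s ∪ t)) (hp : 1 ≤ p)
    (hu : MemLp u p (μ.restrict (s ∪ t))) {ε : ℝ} (hε : 0 ≤ ε)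
    (hbound : ‖∫ x in t, u x ∂μ‖ ≤
      ε * μ.real t ^ (1 - p.toReal⁻¹) * lpNorm u p (μ.restrict t)) :
    (μ.real (s ∪ t) ^ (1 - p.toReal⁻¹))⁻¹ * ‖∫ x in s ∪ t, u x ∂μ‖ ≤
      ((1 - μ.real t / μ.real (s ∪ t)) ^ (1 - p.toReal⁻¹) +
        (μ.real t / μ.real (s ∪ t)) ^ (1 - p.toReal⁻¹) * ε) *
        lpNorm u p (μ.restrict (s ∪ t)) := by
  rw [← measureReal_div_measureReal_union hdisj ht hs_fin ht_fin hpos,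
    Real.div_rpow measureReal_nonneg measureReal_nonneg,
    Real.div_rpow measureReal_nonneg measureReal_nonneg]
  calc
    _ ≤ (μ.real (s ∪ t) ^ (1 - p.toReal⁻¹))⁻¹ *
        ((μ.real s ^ (1 - p.toReal⁻¹) + μ.real t ^ (1 - p.toReal⁻¹) * ε) *
          lpNorm u p (μ.restrict (s ∪ t))) := by
      gcongr
      exact norm_setIntegral_union_le_of_norm_setIntegral_le hdisj ht hs_fin ht_fin hp hu hε hbound
    _ = _ := by ring

end

theorem l2norm_eq_lpNorm {n : ℕ} {D : Set (EuclideanSpace ℝ (Fin n))}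
    {u : EuclideanSpace ℝ (Fin n) → ℝ} (hu : AEStronglyMeasurable u (volume.restrict D)) :
    l2norm D u = lpNorm u 2 (volume.restrict D) := by
  simp [l2norm, lpNorm_eq_integral_norm_rpow_toReal two_ne_zero ENNReal.ofNat_ne_top hu,
    Real.sqrt_eq_rpow]

theorem sqrt_eq_rpow_one_sub_inv_toReal_two (x : ℝ) :
    Real.sqrt x = x ^ (1 - (2 : ENNReal).toReal⁻¹) := by
  rw [Real.sqrt_eq_rpow]
  norm_num

theorem stmt0 {n : ℕ} (Ω ΩI : Set (EuclideanSpace ℝ (Fin n)))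
    (hΩmeas : MeasurableSet Ω) (hΩImeas : MeasurableSet ΩI)
    (hdisj : Disjoint Ω ΩI)
    (hΩbdd : Bornology.IsBounded Ω) (hΩIbdd : Bornology.IsBounded ΩI)
    (hΩpos : 0 < volume Ω) (hΩIpos : 0 < volume ΩI)
    (u : EuclideanSpace ℝ (Fin n) → ℝ)
    (hu : MemLp u 2 (volume.restrict (Ω ∪ ΩI)))
    (ε : ℝ) (hε0 : 0 ≤ ε) (hε1 : ε < 1)
    (hbound : |∫ x in ΩI, u x| ≤ ε * Real.sqrt (volume ΩI).toReal * l2norm ΩI u) :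
    (Real.sqrt (volume (Ω ∪ ΩI)).toReal)⁻¹ * |∫ x in Ω ∪ ΩI, u x| ≤
      (Real.sqrt (1 - (volume ΩI).toReal / (volume (Ω ∪ ΩI)).toReal) +
        Real.sqrt ((volume ΩI).toReal / (volume (Ω ∪ ΩI)).toReal) * ε) *
        l2norm (Ω ∪ ΩI) u := by
  rw [l2norm_eq_lpNorm (hu.1.mono_set Set.subset_union_right)] at hbound
  simp only [l2norm_eq_lpNorm hu.1, sqrt_eq_rpow_one_sub_inv_toReal_two] at hbound ⊢
  exact stmt0_general hdisj hΩImeas hΩbdd.measure_lt_top.ne hΩIbdd.measure_lt_top.ne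
    (hΩpos.trans_le (measure_mono Set.subset_union_left)) one_le_two hu hε0 hbound
end

section
/- Let u ∈ L²(Ω̄), let 0 < t ≤ 1, and set ϱ = |Ω_I|/|Ω̄|. If |∫_{Ω_I} u(x) dx| ≤ ε·|Ω_I|^{1/2}·‖u‖_{L²(Ω_I)} with 0 ≤ ε ≤ (1−t)√ϱ / (1 + √(1−ϱ)), then ‖u − |Ω̄|^{-1}∫_{Ω̄} u(x) dx‖²_{L²(Ω̄)} ≥ (tϱ/(1 + √(1−ϱ)))·‖u‖²_{L²(Ω̄)}, where the subtracted quantity is the constant function on Ω̄ equal to the mean of u. -/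
open MeasureTheory

/-!
Subtracting the mean `ū` costs `‖u‖² - ‖u - ū‖² = |Ω̄|⁻¹ (∫_Ω̄ u)²`. Cauchy–Schwarz bounds the
integral of `u` over `Ω` by `|Ω|^{1/2} ‖u‖_{L²(Ω)}`, and the hypothesis saves a factor `ε` on `Ω_I`;
a second Cauchy–Schwarz, now in `ℝ²`, combines the two into `(∫_Ω̄ u)² ≤ (|Ω| + ε² |Ω_I|) ‖u‖²`.
Hence `‖u - ū‖² ≥ ϱ (1 - ε²) ‖u‖²`, and the condition on `ε` makes `1 - ε²` at least
`t / (1 + √(1 - ϱ))`.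
-/

theorem add_sq_le_add_mul_add_of_sq_le_mul {R : Type*} [CommSemiring R] [LinearOrder R]
    [IsStrictOrderedRing R] [ExistsAddOfLE R] {a b p q P Q : R} (hp : 0 ≤ p) (hq : 0 ≤ q)
    (hP : 0 ≤ P) (hQ : 0 ≤ Q) (ha : a ^ 2 ≤ p * P) (hb : b ^ 2 ≤ q * Q) :
    (a + b) ^ 2 ≤ (p + q) * (P + Q) := by
  simpa [Fin.sum_univ_two] using
    Finset.sum_sq_le_sum_mul_sum_of_sq_le_mul Finset.univ (r := ![a, b]) (f := ![p, q])
      (g := ![P, Q]) (by simp [hp, hq]) (by simp [hP, hQ]) (by simp [ha, hb])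

theorem div_one_add_sqrt_le_one_sub_sq {t ϱ ε : ℝ} (ht₀ : 0 ≤ t) (ht₁ : t ≤ 1) (hϱ₀ : 0 ≤ ϱ)
    (hϱ₁ : ϱ ≤ 1) (hε₀ : 0 ≤ ε) (hε : ε ≤ (1 - t) * √ϱ / (1 + √(1 - ϱ))) :
    t / (1 + √(1 - ϱ)) ≤ 1 - ε ^ 2 := by
  set s := √(1 - ϱ)
  have hs₀ : 0 ≤ s := Real.sqrt_nonneg _
  have hs₁ : s ≤ 1 := Real.sqrt_le_one.2 (by linarith)
  have hϱs : ϱ = (1 - s) * (1 + s) := by linarith [Real.sq_sqrt (sub_nonneg.2 hϱ₁)]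
  have ε_sq_le : ε ^ 2 ≤ (1 - t) * (1 - s) / (1 + s) := by
    calc ε ^ 2 ≤ ((1 - t) * √ϱ / (1 + s)) ^ 2 := by gcongr
      _ = (1 - t) ^ 2 * (1 - s) / (1 + s) := by
        rw [div_pow, mul_pow, Real.sq_sqrt hϱ₀, hϱs]
        field_simp
      _ ≤ (1 - t) * (1 - s) / (1 + s) := by
        gcongr
        exact pow_le_of_le_one (by linarith) (by linarith) two_ne_zero
  have ts_le : t + (1 - t) * (1 - s) ≤ 1 + s := by
    linarith [mul_le_mul_of_nonneg_right ht₁ hs₀]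
  have : t / (1 + s) + (1 - t) * (1 - s) / (1 + s) ≤ 1 := by
    rwa [← add_div, div_le_one (by positivity)]
  linarith

section

variable {X : Type*} [MeasurableSpace X] {μ : Measure X} {u : X → ℝ}

theorem integral_sub_average_sq [IsFiniteMeasure μ] (hu : MemLp u 2 μ) :
    ∫ x, (u x - ⨍ y, u y ∂μ) ^ 2 ∂μ
      = ∫ x, u x ^ 2 ∂μ - μ.real Set.univ * (⨍ x, u x ∂μ) ^ 2 := by
  set m := ⨍ x, u x ∂μ
  have hint : Integrable u μ := hu.integrable one_le_two
  have hmean : ∫ x, (u x - m) ∂μ = 0 := integral_sub_average μ u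
  calc ∫ x, (u x - m) ^ 2 ∂μ
      = ∫ x, (u x ^ 2 - (2 * m * (u x - m) + m ^ 2)) ∂μ := by
        congr with x
        ring
    _ = ∫ x, u x ^ 2 ∂μ - μ.real Set.univ * m ^ 2 := by
        have hlin : Integrable (fun x ↦ 2 * m * (u x - m)) μ :=
          (hint.sub (integrable_const m)).const_mul _
        have haff : Integrable (fun x ↦ 2 * m * (u x - m) + m ^ 2) μ :=
          hlin.add (integrable_const _)
        rw [integral_sub hu.integrable_sq haff, integral_add hlin (integrable_const _),
          integral_const_mul, hmean, integral_const, smul_eq_mul, mul_zero, zero_add]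

theorem sq_integral_le_measureReal_univ_mul_integral_sq [IsFiniteMeasure μ] (hu : MemLp u 2 μ) :
    (∫ x, u x ∂μ) ^ 2 ≤ μ.real Set.univ * ∫ x, u x ^ 2 ∂μ := by
  have hvar : μ.real Set.univ * (⨍ x, u x ∂μ) ^ 2 ≤ ∫ x, u x ^ 2 ∂μ := by
    rw [← sub_nonneg, ← integral_sub_average_sq hu]
    exact integral_nonneg fun x ↦ sq_nonneg _
  calc (∫ x, u x ∂μ) ^ 2 = μ.real Set.univ * (μ.real Set.univ * (⨍ x, u x ∂μ) ^ 2) := by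
        rw [← measure_smul_average, smul_eq_mul]
        ring
    _ ≤ μ.real Set.univ * ∫ x, u x ^ 2 ∂μ := by gcongr

variable {Ω ΩI : Set X} {ε : ℝ}

theorem sq_setIntegral_union_le (hΩI : MeasurableSet ΩI) (hdisj : Disjoint Ω ΩI)
    (hfin : μ (Ω ∪ ΩI) ≠ ⊤) (hu : MemLp u 2 (μ.restrict (Ω ∪ ΩI)))
    (hbound : |∫ x in ΩI, u x ∂μ| ≤ ε * √(μ.real ΩI) * √(∫ x in ΩI, u x ^ 2 ∂μ)) :
    (∫ x in Ω ∪ ΩI, u x ∂μ) ^ 2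
      ≤ (μ.real Ω + ε ^ 2 * μ.real ΩI) * ∫ x in Ω ∪ ΩI, u x ^ 2 ∂μ := by
  have : Fact (μ (Ω ∪ ΩI) < ⊤) := ⟨hfin.lt_top⟩
  have : Fact (μ Ω < ⊤) := ⟨measure_lt_top_of_subset Set.subset_union_left hfin⟩
  have hint : IntegrableOn u (Ω ∪ ΩI) μ := hu.integrable one_le_two
  have hint_sq : IntegrableOn (fun x ↦ u x ^ 2) (Ω ∪ ΩI) μ := hu.integrable_sq
  have sq_nonneg_on (D : Set X) : 0 ≤ ∫ x in D, u x ^ 2 ∂μ := integral_nonneg fun x ↦ sq_nonneg _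
  have hΩ_sq : (∫ x in Ω, u x ∂μ) ^ 2 ≤ μ.real Ω * ∫ x in Ω, u x ^ 2 ∂μ := by
    simpa only [measureReal_restrict_apply_univ] using
      sq_integral_le_measureReal_univ_mul_integral_sq
        (hu.mono_measure (Measure.restrict_mono_set μ Set.subset_union_left))
  have hΩI_sq : (∫ x in ΩI, u x ∂μ) ^ 2 ≤ ε ^ 2 * μ.real ΩI * ∫ x in ΩI, u x ^ 2 ∂μ := by
    calc (∫ x in ΩI, u x ∂μ) ^ 2
        ≤ (ε * √(μ.real ΩI) * √(∫ x in ΩI, u x ^ 2 ∂μ)) ^ 2 :=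
          sq_le_sq.2 (hbound.trans (le_abs_self _))
      _ = ε ^ 2 * μ.real ΩI * ∫ x in ΩI, u x ^ 2 ∂μ := by
        rw [mul_pow, mul_pow, Real.sq_sqrt measureReal_nonneg, Real.sq_sqrt (sq_nonneg_on ΩI)]
  rw [setIntegral_union hdisj hΩI hint.left_of_union hint.right_of_union,
    setIntegral_union hdisj hΩI hint_sq.left_of_union hint_sq.right_of_union]
  exact add_sq_le_add_mul_add_of_sq_le_mul measureReal_nonneg (by positivity)
    (sq_nonneg_on Ω) (sq_nonneg_on ΩI) hΩ_sq hΩI_sq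

theorem mul_setIntegral_sq_le_setIntegral_sub_setAverage_sq (hΩI : MeasurableSet ΩI)
    (hdisj : Disjoint Ω ΩI) (hne : μ (Ω ∪ ΩI) ≠ 0) (hfin : μ (Ω ∪ ΩI) ≠ ⊤)
    (hu : MemLp u 2 (μ.restrict (Ω ∪ ΩI)))
    (hbound : |∫ x in ΩI, u x ∂μ| ≤ ε * √(μ.real ΩI) * √(∫ x in ΩI, u x ^ 2 ∂μ)) :
    μ.real ΩI / μ.real (Ω ∪ ΩI) * (1 - ε ^ 2) * ∫ x in Ω ∪ ΩI, u x ^ 2 ∂μ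
      ≤ ∫ x in Ω ∪ ΩI, (u x - ⨍ y in Ω ∪ ΩI, u y ∂μ) ^ 2 ∂μ := by
  have : Fact (μ (Ω ∪ ΩI) < ⊤) := ⟨hfin.lt_top⟩
  have hpos : 0 < μ.real (Ω ∪ ΩI) := ENNReal.toReal_pos hne hfin
  have hadd : μ.real (Ω ∪ ΩI) = μ.real Ω + μ.real ΩI :=
    measureReal_union hdisj hΩI (measure_ne_top_of_subset Set.subset_union_left hfin)
      (measure_ne_top_of_subset Set.subset_union_right hfin)
  have hmean := sq_setIntegral_union_le hΩI hdisj hfin hu hbound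
  rw [integral_sub_average_sq hu, measureReal_restrict_apply_univ, setAverage_eq, smul_eq_mul]
  set M := μ.real (Ω ∪ ΩI)
  set S := ∫ x in Ω ∪ ΩI, u x ^ 2 ∂μ
  calc μ.real ΩI / M * (1 - ε ^ 2) * S
      = S - (μ.real Ω + ε ^ 2 * μ.real ΩI) * S / M := by
        rw [← sub_eq_of_eq_add hadd]
        field_simp
        ring
    _ ≤ S - (∫ x in Ω ∪ ΩI, u x ∂μ) ^ 2 / M := by gcongr
    _ = S - M * (M⁻¹ * ∫ x in Ω ∪ ΩI, u x ∂μ) ^ 2 := by field_simp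

theorem stmt2_general (hΩI : MeasurableSet ΩI) (hdisj : Disjoint Ω ΩI) (hne : μ (Ω ∪ ΩI) ≠ 0)
    (hfin : μ (Ω ∪ ΩI) ≠ ⊤) (hu : MemLp u 2 (μ.restrict (Ω ∪ ΩI)))
    {t ϱ : ℝ} (ht₀ : 0 ≤ t) (ht₁ : t ≤ 1) (hϱ : ϱ = μ.real ΩI / μ.real (Ω ∪ ΩI))
    (hε₀ : 0 ≤ ε) (hε : ε ≤ (1 - t) * √ϱ / (1 + √(1 - ϱ)))
    (hbound : |∫ x in ΩI, u x ∂μ| ≤ ε * √(μ.real ΩI) * √(∫ x in ΩI, u x ^ 2 ∂μ)) :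
    t * ϱ / (1 + √(1 - ϱ)) * ∫ x in Ω ∪ ΩI, u x ^ 2 ∂μ
      ≤ ∫ x in Ω ∪ ΩI, (u x - ⨍ y in Ω ∪ ΩI, u y ∂μ) ^ 2 ∂μ := by
  have hϱ₀ : 0 ≤ ϱ := by rw [hϱ]; positivity
  have hϱ₁ : ϱ ≤ 1 := by
    rw [hϱ]
    exact div_le_one_of_le₀ (measureReal_mono Set.subset_union_right hfin) measureReal_nonneg
  calc t * ϱ / (1 + √(1 - ϱ)) * ∫ x in Ω ∪ ΩI, u x ^ 2 ∂μ
      = ϱ * (t / (1 + √(1 - ϱ))) * ∫ x in Ω ∪ ΩI, u x ^ 2 ∂μ := by ring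
    _ ≤ ϱ * (1 - ε ^ 2) * ∫ x in Ω ∪ ΩI, u x ^ 2 ∂μ := by
        gcongr
        exact div_one_add_sqrt_le_one_sub_sq ht₀ ht₁ hϱ₀ hϱ₁ hε₀ hε
    _ ≤ ∫ x in Ω ∪ ΩI, (u x - ⨍ y in Ω ∪ ΩI, u y ∂μ) ^ 2 ∂μ := by
        rw [hϱ]
        exact mul_setIntegral_sq_le_setIntegral_sub_setAverage_sq hΩI hdisj hne hfin hu hbound

end

theorem stmt2 {n : ℕ} (Ω ΩI : Set (EuclideanSpace ℝ (Fin n)))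
    (hΩmeas : MeasurableSet Ω) (hΩImeas : MeasurableSet ΩI)
    (hdisj : Disjoint Ω ΩI)
    (hΩbdd : Bornology.IsBounded Ω) (hΩIbdd : Bornology.IsBounded ΩI)
    (hΩpos : 0 < volume Ω) (hΩIpos : 0 < volume ΩI)
    (u : EuclideanSpace ℝ (Fin n) → ℝ)
    (hu : MemLp u 2 (volume.restrict (Ω ∪ ΩI)))
    (t : ℝ) (ht0 : 0 < t) (ht1 : t ≤ 1)
    (ϱ : ℝ) (hϱ : ϱ = (volume ΩI).toReal / (volume (Ω ∪ ΩI)).toReal)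
    (ε : ℝ) (hε0 : 0 ≤ ε)
    (hε : ε ≤ (1 - t) * Real.sqrt ϱ / (1 + Real.sqrt (1 - ϱ)))
    (hbound : |∫ x in ΩI, u x| ≤ ε * Real.sqrt (volume ΩI).toReal * l2norm ΩI u) :
    (∫ x in Ω ∪ ΩI,
        (u x - ((volume (Ω ∪ ΩI)).toReal)⁻¹ * ∫ y in Ω ∪ ΩI, u y) ^ 2) ≥
      t * ϱ / (1 + Real.sqrt (1 - ϱ)) * ∫ x in Ω ∪ ΩI, u x ^ 2 := by
  have hne : volume (Ω ∪ ΩI) ≠ 0 := (hΩIpos.trans_le (measure_mono Set.subset_union_right)).ne'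
  have hfin : volume (Ω ∪ ΩI) ≠ ⊤ := (hΩbdd.union hΩIbdd).measure_lt_top.ne
  simpa only [setAverage_eq, smul_eq_mul, measureReal_def, ge_iff_le] using
    stmt2_general hΩImeas hdisj hne hfin hu ht0.le ht1 hϱ hε0 hε hbound
end

section
/- Let u ∈ L²(Ω̄) satisfy ∫_{Ω_I} u(x) dx = 0, and set ϱ = |Ω_I|/|Ω̄|. Then ‖u − |Ω̄|^{-1}∫_{Ω̄} u(x) dx‖²_{L²(Ω̄)} ≥ ϱ·‖u‖²_{L²(Ω̄)}, where the subtracted quantity is the constant function on Ω̄ equal to the mean of u. -/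
open MeasureTheory

/-!
Write `M` for the total mass. The variance identity `M ∫ ‖u - ⨍ u‖² = M ∫ ‖u‖² - ‖∫ u‖²` reduces
the claim to an upper bound for `‖∫ u‖²`. As `u` has zero integral over `t`, only `tᶜ` contributes
to `∫ u`, so Cauchy–Schwarz gives `‖∫ u‖² ≤ (M - μ t) ∫ ‖u‖²`.
-/

section Variance

variable {α E : Type*} [MeasurableSpace α] [NormedAddCommGroup E] [InnerProductSpace ℝ E]
  [CompleteSpace E] {μ : Measure α} {s t : Set α} {u : α → E}

theorem integral_norm_sub_const_sq [IsFiniteMeasure μ] (hu : MemLp u 2 μ) (c : E) :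
    ∫ x, ‖u x - c‖ ^ 2 ∂μ =
      ∫ x, ‖u x‖ ^ 2 ∂μ - 2 * inner ℝ c (∫ x, u x ∂μ) + μ.real Set.univ * ‖c‖ ^ 2 := by
  have hu_int : Integrable u μ := hu.integrable one_le_two
  have hu_sq : Integrable (fun x ↦ ‖u x‖ ^ 2) μ := hu.integrable_norm_pow two_ne_zero
  have hu_inner : Integrable (fun x ↦ 2 * inner ℝ c (u x)) μ := (hu_int.const_inner c).const_mul 2
  have hu_diff : Integrable (fun x ↦ ‖u x‖ ^ 2 - 2 * inner ℝ c (u x)) μ := hu_sq.sub hu_inner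
  calc ∫ x, ‖u x - c‖ ^ 2 ∂μ
      = ∫ x, (‖u x‖ ^ 2 - 2 * inner ℝ c (u x) + ‖c‖ ^ 2) ∂μ := by
        simp only [norm_sub_sq_real, real_inner_comm]
    _ = ∫ x, ‖u x‖ ^ 2 ∂μ - 2 * inner ℝ c (∫ x, u x ∂μ) + μ.real Set.univ * ‖c‖ ^ 2 := by
        rw [integral_add hu_diff (integrable_const _), integral_sub hu_sq hu_inner,
          integral_const_mul, integral_inner hu_int, integral_const, smul_eq_mul]

theorem measureReal_univ_mul_integral_norm_sub_average_sq [IsFiniteMeasure μ] (hu : MemLp u 2 μ) :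
    μ.real Set.univ * ∫ x, ‖u x - ⨍ y, u y ∂μ‖ ^ 2 ∂μ =
      μ.real Set.univ * ∫ x, ‖u x‖ ^ 2 ∂μ - ‖∫ x, u x ∂μ‖ ^ 2 := by
  rw [integral_norm_sub_const_sq hu, ← measure_smul_average μ u, real_inner_smul_right,
    real_inner_self_eq_norm_sq, norm_smul, mul_pow, Real.norm_eq_abs, sq_abs]
  ring

theorem norm_integral_sq_le [IsFiniteMeasure μ] (hu : MemLp u 2 μ) :
    ‖∫ x, u x ∂μ‖ ^ 2 ≤ μ.real Set.univ * ∫ x, ‖u x‖ ^ 2 ∂μ := by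
  have variance_nonneg : 0 ≤ μ.real Set.univ * ∫ x, ‖u x - ⨍ y, u y ∂μ‖ ^ 2 ∂μ := by positivity
  rwa [measureReal_univ_mul_integral_norm_sub_average_sq hu, sub_nonneg] at variance_nonneg

theorem norm_integral_sq_le_of_setIntegral_eq_zero [IsFiniteMeasure μ] (hu : MemLp u 2 μ)
    (ht : MeasurableSet t) (hzero : ∫ x in t, u x ∂μ = 0) :
    ‖∫ x, u x ∂μ‖ ^ 2 ≤ (μ.real Set.univ - μ.real t) * ∫ x, ‖u x‖ ^ 2 ∂μ := by
  have integral_eq_compl : ∫ x, u x ∂μ = ∫ x in tᶜ, u x ∂μ := by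
    rw [← integral_add_compl ht (hu.integrable one_le_two), hzero, zero_add]
  have integral_sq_compl_le : ∫ x in tᶜ, ‖u x‖ ^ 2 ∂μ ≤ ∫ x, ‖u x‖ ^ 2 ∂μ :=
    setIntegral_le_integral (hu.integrable_norm_pow two_ne_zero)
      (.of_forall fun x ↦ sq_nonneg ‖u x‖)
  calc ‖∫ x, u x ∂μ‖ ^ 2
      ≤ μ.real tᶜ * ∫ x in tᶜ, ‖u x‖ ^ 2 ∂μ := by
        rw [integral_eq_compl, ← measureReal_restrict_apply_univ tᶜ]
        exact norm_integral_sq_le (hu.restrict tᶜ)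
    _ ≤ μ.real tᶜ * ∫ x, ‖u x‖ ^ 2 ∂μ :=
        mul_le_mul_of_nonneg_left integral_sq_compl_le measureReal_nonneg
    _ = (μ.real Set.univ - μ.real t) * ∫ x, ‖u x‖ ^ 2 ∂μ := by rw [measureReal_compl ht]

theorem measureReal_div_mul_integral_norm_sq_le_of_setIntegral_eq_zero [IsFiniteMeasure μ]
    (hu : MemLp u 2 μ) (ht : MeasurableSet t) (hzero : ∫ x in t, u x ∂μ = 0) :
    μ.real t / μ.real Set.univ * ∫ x, ‖u x‖ ^ 2 ∂μ ≤ ∫ x, ‖u x - ⨍ y, u y ∂μ‖ ^ 2 ∂μ := by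
  rcases eq_zero_or_neZero μ with rfl | _
  · simp
  · have mass_pos : 0 < μ.real Set.univ := measureReal_univ_pos
    rw [div_mul_eq_mul_div, div_le_iff₀' mass_pos,
      measureReal_univ_mul_integral_norm_sub_average_sq hu]
    linarith [norm_integral_sq_le_of_setIntegral_eq_zero hu ht hzero]

theorem stmt3_general (ht : MeasurableSet t) (hts : t ⊆ s) (hs : μ s ≠ ⊤)
    (hu : MemLp u 2 (μ.restrict s)) (hzero : ∫ x in t, u x ∂μ = 0) :
    μ.real t / μ.real s * ∫ x in s, ‖u x‖ ^ 2 ∂μ ≤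
      ∫ x in s, ‖u x - ⨍ y in s, u y ∂μ‖ ^ 2 ∂μ := by
  have : IsFiniteMeasure (μ.restrict s) := isFiniteMeasure_restrict.mpr hs
  have restrict_restrict_eq : (μ.restrict s).restrict t = μ.restrict t :=
    Measure.restrict_restrict_of_subset hts
  have measureReal_eq : (μ.restrict s).real t = μ.real t := by
    rw [measureReal_restrict_apply ht, Set.inter_eq_left.mpr hts]
  simpa only [measureReal_eq, measureReal_restrict_apply_univ] using
    measureReal_div_mul_integral_norm_sq_le_of_setIntegral_eq_zero hu ht
      (by rwa [restrict_restrict_eq])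

end Variance

theorem stmt3 {n : ℕ} (Ω ΩI : Set (EuclideanSpace ℝ (Fin n)))
    (hΩmeas : MeasurableSet Ω) (hΩImeas : MeasurableSet ΩI)
    (hdisj : Disjoint Ω ΩI)
    (hΩbdd : Bornology.IsBounded Ω) (hΩIbdd : Bornology.IsBounded ΩI)
    (hΩpos : 0 < volume Ω) (hΩIpos : 0 < volume ΩI)
    (u : EuclideanSpace ℝ (Fin n) → ℝ)
    (hu : MemLp u 2 (volume.restrict (Ω ∪ ΩI)))
    (hzero : ∫ x in ΩI, u x = 0)
    (ϱ : ℝ) (hϱ : ϱ = (volume ΩI).toReal / (volume (Ω ∪ ΩI)).toReal) :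
    (∫ x in Ω ∪ ΩI,
        (u x - ((volume (Ω ∪ ΩI)).toReal)⁻¹ * ∫ y in Ω ∪ ΩI, u y) ^ 2) ≥
      ϱ * ∫ x in Ω ∪ ΩI, u x ^ 2 := by
  simpa [hϱ, setAverage_eq, Measure.real] using stmt3_general hΩImeas Set.subset_union_right
    (hΩbdd.union hΩIbdd).measure_lt_top.ne hu hzero
end

section
/- Let U be a closed subspace of L²(Ω̄), Λ a closed subspace of L²(Ω_I), and U^c = {u ∈ U : ∫_{Ω_I} u(x)·λ(x) dx = 0 for all λ ∈ Λ}. Assume: (i) there exists c > 0 with a(z,z) ≥ c·‖z‖²_{L²(Ω̄)} for all z ∈ U^c; and (ii) there is β > 0 such that every λ ∈ Λ admits an extension λ̃ ∈ U with λ̃|_{Ω_I} = λ and β·‖λ̃‖_{L²(Ω̄)} ≤ ‖λ‖_{L²(Ω_I)}. Then for every f ∈ L²(Ω) there exist unique u ∈ U and λ ∈ Λ such that a(u,v) + ∫_{Ω_I} λ(x)·v(x) dx = ∫_Ω v(x)·f(x) dx for all v ∈ U, and ∫_{Ω_I} u(x)·ν(x) dx = 0 for all ν ∈ Λ. -/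
open MeasureTheory

/-- The nonlocal bilinear form
`a(u,v) = ∫_D ∫_D γ(x,y) (u x - u y) (v x - v y) dy dx`. -/
noncomputable def aform {n : ℕ} (D : Set (EuclideanSpace ℝ (Fin n)))
    (γ : EuclideanSpace ℝ (Fin n) → EuclideanSpace ℝ (Fin n) → ℝ)
    (u v : EuclideanSpace ℝ (Fin n) → ℝ) : ℝ :=
  ∫ x in D, ∫ y in D, γ x y * (u x - u y) * (v x - v y)

/-!
Let `R` be restriction to `Ω_I`, let `P` be the orthogonal projection onto `Λ`, and let `B = P ∘ R`
on `U`. Then `U^c = ker B`, and the extension property makes `B` surjective. Lax-Milgram on `ker B`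
yields `u`. The residual `∫_Ω v f - a(u, v)` vanishes for `v ∈ ker B`, so by the open mapping
theorem it factors through `B` as a continuous functional on `Λ`, which the Riesz theorem represents
by `λ`.
-/

open Function
open scoped ENNReal RealInnerProductSpace

section SaddlePoint

theorem exists_comp_eq_of_ker_le_ker {𝕜 E F G : Type*} [NontriviallyNormedField 𝕜]
    [NormedAddCommGroup E] [NormedSpace 𝕜 E] [CompleteSpace E]
    [NormedAddCommGroup F] [NormedSpace 𝕜 F] [CompleteSpace F]
    [AddCommGroup G] [Module 𝕜 G] [TopologicalSpace G]
    {B : E →L[𝕜] F} (hB : Surjective B) {g : E →L[𝕜] G} (hker : B.ker ≤ g.ker) :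
    ∃ φ : F →L[𝕜] G, φ ∘L B = g := by
  let φ : F →ₗ[𝕜] G :=
    B.ker.liftQ g.toLinearMap hker ∘ₗ (B.toLinearMap.quotKerEquivOfSurjective hB).symm
  have hφ (x : E) : φ (B x) = g x := by
    have hx : (B.toLinearMap.quotKerEquivOfSurjective hB).symm (B x) = B.ker.mkQ x :=
      (LinearEquiv.symm_apply_eq _).2 rfl
    simp only [φ, LinearMap.comp_apply, LinearEquiv.coe_coe, hx]
    rfl
  have hφ_cont : Continuous φ :=
    (B.isQuotientMap hB).continuous_iff.2 <| g.continuous.congr fun x => (hφ x).symm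
  exact ⟨⟨φ, hφ_cont⟩, ContinuousLinearMap.ext hφ⟩

variable {V M : Type*} [NormedAddCommGroup V] [InnerProductSpace ℝ V]
  [NormedAddCommGroup M] [InnerProductSpace ℝ M]

theorem exists_forall_apply_eq_of_isCoercive [CompleteSpace V] {A : V →L[ℝ] V →L[ℝ] ℝ}
    (hA : IsCoercive A) (F : V →L[ℝ] ℝ) : ∃ u, ∀ v, A u v = F v := by
  obtain ⟨u, hu⟩ := hA.continuousLinearEquivOfBilin.surjective
    ((InnerProductSpace.toDual ℝ V).symm F)
  refine ⟨u, fun v => ?_⟩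
  rw [← hA.continuousLinearEquivOfBilin_apply, hu, InnerProductSpace.toDual_symm_apply]

theorem exists_mem_forall_mem_apply_eq (W : Submodule ℝ V) [CompleteSpace W]
    {A : V →L[ℝ] V →L[ℝ] ℝ} {c : ℝ} (hc : 0 < c) (hA : ∀ z ∈ W, c * ‖z‖ ^ 2 ≤ A z z)
    (F : V →L[ℝ] ℝ) : ∃ u ∈ W, ∀ v ∈ W, A u v = F v := by
  have hcoercive : IsCoercive (A.bilinearComp W.subtypeL W.subtypeL) :=
    ⟨c, hc, fun z => by simpa [sq, mul_assoc] using hA z z.2⟩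
  obtain ⟨u, hu⟩ := exists_forall_apply_eq_of_isCoercive hcoercive (F ∘L W.subtypeL)
  exact ⟨u, u.2, fun v hv => hu ⟨v, hv⟩⟩

theorem exists_saddlePoint [CompleteSpace V] [CompleteSpace M] {A : V →L[ℝ] V →L[ℝ] ℝ}
    {B : V →L[ℝ] M} (hB : Surjective B) {c : ℝ} (hc : 0 < c)
    (hA : ∀ z, B z = 0 → c * ‖z‖ ^ 2 ≤ A z z) (F : V →L[ℝ] ℝ) :
    ∃ (u : V) (l : M), (∀ v, A u v + ⟪l, B v⟫ = F v) ∧ B u = 0 := by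
  have : CompleteSpace B.ker := B.isClosed_ker.completeSpace_coe
  obtain ⟨u, hu, hAu⟩ := exists_mem_forall_mem_apply_eq B.ker hc hA F
  have hresidual : B.ker ≤ (F - A u).ker := fun v hv => sub_eq_zero.2 (hAu v hv).symm
  obtain ⟨φ, hφ⟩ := exists_comp_eq_of_ker_le_ker hB hresidual
  refine ⟨u, (InnerProductSpace.toDual ℝ M).symm φ, fun v => ?_, hu⟩
  have hφv : φ (B v) = F v - A u v := DFunLike.congr_fun hφ v
  rw [InnerProductSpace.toDual_symm_apply, hφv, add_sub_cancel]

theorem saddlePoint_eq_zero {A : V →L[ℝ] V →L[ℝ] ℝ} {B : V →L[ℝ] M} (hB : Surjective B)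
    {c : ℝ} (hc : 0 < c) (hA : ∀ z, B z = 0 → c * ‖z‖ ^ 2 ≤ A z z) {u : V} {l : M}
    (h : ∀ v, A u v + ⟪l, B v⟫ = 0) (hu : B u = 0) : u = 0 ∧ l = 0 := by
  have hAuu : A u u = 0 := by simpa [hu] using h u
  have hu_zero : u = 0 := by
    have hnorm : ‖u‖ ^ 2 ≤ 0 := nonpos_of_mul_nonpos_right (hAuu ▸ hA u hu) hc
    simpa using hnorm.antisymm (sq_nonneg _)
  obtain ⟨w, rfl⟩ := hB l
  exact ⟨hu_zero, by simpa [hu_zero] using h w⟩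

theorem existsUnique_saddlePoint [CompleteSpace V] [CompleteSpace M] {A : V →L[ℝ] V →L[ℝ] ℝ}
    {B : V →L[ℝ] M} (hB : Surjective B) {c : ℝ} (hc : 0 < c)
    (hA : ∀ z, B z = 0 → c * ‖z‖ ^ 2 ≤ A z z) (F : V →L[ℝ] ℝ) :
    ∃! p : V × M, (∀ v, A p.1 v + ⟪p.2, B v⟫ = F v) ∧ B p.1 = 0 := by
  obtain ⟨u, l, hF, hu⟩ := exists_saddlePoint hB hc hA F
  refine ⟨(u, l), ⟨hF, hu⟩, fun ⟨u', l'⟩ ⟨hF', hu'⟩ => ?_⟩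
  have hdiff (v : V) : A (u' - u) v + ⟪l' - l, B v⟫ = 0 := by
    rw [map_sub, sub_apply, inner_sub_left]
    linear_combination hF' v - hF v
  have hker : B (u' - u) = 0 := by rw [map_sub, hu, hu', sub_zero]
  obtain ⟨hsub_u, hsub_l⟩ := saddlePoint_eq_zero hB hc hA hdiff hker
  exact Prod.ext (sub_eq_zero.1 hsub_u) (sub_eq_zero.1 hsub_l)

theorem existsUnique_saddlePoint_of_le_map (U : Submodule ℝ V) [CompleteSpace U]
    (L : Submodule ℝ M) [CompleteSpace L] {A : V →L[ℝ] V →L[ℝ] ℝ} {R : V →L[ℝ] M}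
    (hR : L ≤ U.map R.toLinearMap) {c : ℝ} (hc : 0 < c)
    (hA : ∀ z ∈ U, (∀ l ∈ L, ⟪R z, l⟫ = 0) → c * ‖z‖ ^ 2 ≤ A z z) (F : V →L[ℝ] ℝ) :
    ∃! p : V × M, p.1 ∈ U ∧ p.2 ∈ L ∧ (∀ v ∈ U, A p.1 v + ⟪p.2, R v⟫ = F v) ∧
      ∀ l ∈ L, ⟪R p.1, l⟫ = 0 := by
  let B : U →L[ℝ] L := L.orthogonalProjectionOnto ∘L R ∘L U.subtypeL
  have hB_apply (u : U) : B u = L.orthogonalProjectionOnto (R u) := rfl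
  have hB_ker (u : U) : B u = 0 ↔ ∀ l ∈ L, ⟪R u, l⟫ = 0 := by
    rw [hB_apply, Submodule.orthogonalProjectionOnto_eq_zero_iff, Submodule.mem_orthogonal']
  have hB_inner (l : L) (v : U) : ⟪l, B v⟫ = ⟪(l : M), R v⟫ := by
    rw [hB_apply, Submodule.inner_orthogonalProjectionOnto_eq_of_mem_left]
  have hB : Surjective B := fun l => by
    obtain ⟨t, ht, htl : R t = l⟩ := hR l.2
    exact ⟨⟨t, ht⟩, by rw [hB_apply, htl, L.orthogonalProjectionOnto_mem_subspace_eq_self]⟩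
  obtain ⟨⟨u, l⟩, ⟨hF, hu⟩, huniq⟩ := existsUnique_saddlePoint hB hc
    (A := A.bilinearComp U.subtypeL U.subtypeL)
    (fun z hz => hA z z.2 ((hB_ker z).1 hz)) (F ∘L U.subtypeL)
  refine ⟨(u, l), ⟨u.2, l.2, fun v hv => ?_, (hB_ker u).1 hu⟩, ?_⟩
  · exact hB_inner l ⟨v, hv⟩ ▸ hF ⟨v, hv⟩
  · rintro ⟨u', l'⟩ ⟨hu'U, hl'L, hF', hu'⟩
    have heq := huniq (⟨u', hu'U⟩, ⟨l', hl'L⟩)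
      ⟨fun v => hB_inner ⟨l', hl'L⟩ v ▸ hF' v v.2, (hB_ker _).2 hu'⟩
    exact congrArg (Prod.map Subtype.val Subtype.val) heq

end SaddlePoint

section LpOperators

variable {α β E : Type*} [MeasurableSpace α] [MeasurableSpace β]
  [NormedAddCommGroup E] [NormedSpace ℝ E] {p : ℝ≥0∞} [Fact (1 ≤ p)]

/-- The restriction operator `Lᵖ μ → Lᵖ ν` for `ν ≤ μ`. -/
noncomputable def lpRestrict {μ ν : Measure α} (h : ν ≤ μ) : Lp E p μ →L[ℝ] Lp E p ν :=
  Lp.LpToLpOfMeasureLeSMul ENNReal.one_ne_top (by rwa [one_smul])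

theorem coeFn_lpRestrict {μ ν : Measure α} (h : ν ≤ μ) (g : Lp E p μ) :
    lpRestrict h g =ᵐ[ν] g :=
  Lp.coeFn_LpToLpOfMeasureLeSMul _ _ g

theorem inner_lpRestrict_left {μ ν : Measure α} (h : ν ≤ μ) (u : Lp ℝ 2 μ) (l : Lp ℝ 2 ν) :
    ⟪lpRestrict h u, l⟫ = ∫ x, u x * l x ∂ν := by
  rw [L2.inner_def]
  refine integral_congr_ae ?_
  filter_upwards [coeFn_lpRestrict h u] with x hx
  simp [hx, mul_comm]

theorem inner_lpRestrict_right {μ ν : Measure α} (h : ν ≤ μ) (l : Lp ℝ 2 ν) (u : Lp ℝ 2 μ) :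
    ⟪l, lpRestrict h u⟫ = ∫ x, l x * u x ∂ν := by
  rw [real_inner_comm, inner_lpRestrict_left]
  simp only [mul_comm]

theorem inner_toLp_lpRestrict {μ ν : Measure α} (h : ν ≤ μ) {f : α → ℝ} (hf : MemLp f 2 ν)
    (v : Lp ℝ 2 μ) : ⟪hf.toLp f, lpRestrict h v⟫ = ∫ x, v x * f x ∂ν := by
  rw [real_inner_comm, inner_lpRestrict_left]
  refine integral_congr_ae ?_
  filter_upwards [hf.coeFn_toLp] with x hx
  rw [hx]

/-- The composition operator `g ↦ g ∘ f` from `Lᵖ ν` to `Lᵖ μ`, for `f` whose pushforward of `μ` is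
dominated by a finite multiple of `ν`. It pulls functions back along the two projections of a
product space. -/
noncomputable def lpComp {μ : Measure α} {ν : Measure β} {f : α → β} {c : ℝ≥0∞}
    (hf : Measurable f) (hc : c ≠ ∞) (h : μ.map f ≤ c • ν) : Lp E p ν →L[ℝ] Lp E p μ :=
  (Lp.compMeasurePreservingₗᵢ ℝ f (hf.measurePreserving μ)).toContinuousLinearMap ∘L
    Lp.LpToLpOfMeasureLeSMul hc h

theorem coeFn_lpComp {μ : Measure α} {ν : Measure β} {f : α → β} {c : ℝ≥0∞}
    (hf : Measurable f) (hc : c ≠ ∞) (h : μ.map f ≤ c • ν) (g : Lp E p ν) :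
    lpComp hf hc h g =ᵐ[μ] g ∘ f :=
  (Lp.coeFn_compMeasurePreserving _ (hf.measurePreserving μ)).trans <|
    ae_of_ae_map hf.aemeasurable (Lp.coeFn_LpToLpOfMeasureLeSMul hc h g)

/-- The difference operator `u ↦ ((x, y) ↦ u x - u y)` from `Lᵖ μ` to `Lᵖ (μ × μ)`. -/
noncomputable def lpDifference (μ : Measure α) [IsFiniteMeasure μ] :
    Lp E p μ →L[ℝ] Lp E p (μ.prod μ) :=
  lpComp measurable_fst (measure_ne_top μ Set.univ) Measure.map_fst_prod.le -
    lpComp measurable_snd (measure_ne_top μ Set.univ) Measure.map_snd_prod.le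

theorem coeFn_lpDifference (μ : Measure α) [IsFiniteMeasure μ] (u : Lp E p μ) :
    lpDifference μ u =ᵐ[μ.prod μ] fun z => u z.1 - u z.2 :=
  (Lp.coeFn_sub _ _).trans <| (coeFn_lpComp _ _ _ u).sub (coeFn_lpComp _ _ _ u)

end LpOperators

section NonlocalForm

variable {α : Type*} [MeasurableSpace α]

/-- The nonlocal bilinear form `a(u, v)` with kernel `γ` over an arbitrary measure; `aform D` is the
case of Lebesgue measure on `D`. -/
noncomputable def nonlocalForm (μ : Measure α) (γ : α → α → ℝ) (u v : α → ℝ) : ℝ :=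
  ∫ x, ∫ y, γ x y * (u x - u y) * (v x - v y) ∂μ ∂μ

/-- The form `nonlocalForm μ γ` as a continuous bilinear form on `L² μ`, for an essentially bounded
kernel `γ`: the `L²` pairing of `γ · D u` with `D v`, where `D` is the difference operator. -/
noncomputable def nonlocalFormL {μ : Measure α} [IsFiniteMeasure μ] {γ : α → α → ℝ}
    (hγ : MemLp (uncurry γ) ∞ (μ.prod μ)) : Lp ℝ 2 μ →L[ℝ] Lp ℝ 2 μ →L[ℝ] ℝ :=
  ((ContinuousLinearMap.mul ℝ ℝ).lpPairing (μ.prod μ) 2 2).bilinearComp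
    ((ContinuousLinearMap.mul ℝ ℝ).holderL (μ.prod μ) ∞ 2 2 (hγ.toLp _) ∘L lpDifference μ)
    (lpDifference μ)

theorem nonlocalFormL_apply {μ : Measure α} [IsFiniteMeasure μ] {γ : α → α → ℝ}
    (hγ : MemLp (uncurry γ) ∞ (μ.prod μ)) (u v : Lp ℝ 2 μ) :
    nonlocalFormL hγ u v = nonlocalForm μ γ u v := by
  let γDu := (ContinuousLinearMap.mul ℝ ℝ).holder 2 (hγ.toLp _) (lpDifference μ u)
  have hint : Integrable (fun z => γDu z * lpDifference μ v z) (μ.prod μ) :=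
    (Lp.memLp γDu).integrable_mul (Lp.memLp (lpDifference μ v))
  have hpointwise : (fun z => γDu z * lpDifference μ v z) =ᵐ[μ.prod μ]
      fun z => γ z.1 z.2 * (u z.1 - u z.2) * (v z.1 - v z.2) := by
    filter_upwards [(ContinuousLinearMap.mul ℝ ℝ).coeFn_holder (r := 2) (hγ.toLp _)
      (lpDifference μ u), hγ.coeFn_toLp, coeFn_lpDifference μ u, coeFn_lpDifference μ v]
      with z hγDu hγz hu hv
    simp only [γDu, hγDu, hγz, hu, hv, ContinuousLinearMap.mul_apply', uncurry]
  calc nonlocalFormL hγ u v = ∫ z, γDu z * lpDifference μ v z ∂μ.prod μ :=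
        ContinuousLinearMap.lpPairing_eq_integral _ _ _
    _ = ∫ z, γ z.1 z.2 * (u z.1 - u z.2) * (v z.1 - v z.2) ∂μ.prod μ :=
        integral_congr_ae hpointwise
    _ = nonlocalForm μ γ u v := integral_prod _ (hint.congr hpointwise)

theorem stmt9_general {μ μI ρ : Measure α} [IsFiniteMeasure μ] (hμI : μI ≤ μ) (hρ : ρ ≤ μ)
    {γ : α → α → ℝ} (hγ : MemLp (uncurry γ) ∞ (μ.prod μ))
    {U : Submodule ℝ (Lp ℝ 2 μ)} (hU : IsClosed (U : Set (Lp ℝ 2 μ)))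
    {L : Submodule ℝ (Lp ℝ 2 μI)} (hL : IsClosed (L : Set (Lp ℝ 2 μI)))
    {c : ℝ} (hc : 0 < c)
    (hcoer : ∀ z ∈ U, (∀ l ∈ L, ∫ x, z x * l x ∂μI = 0) → c * ‖z‖ ^ 2 ≤ nonlocalForm μ γ z z)
    (hext : ∀ l ∈ L, ∃ t ∈ U, t =ᵐ[μI] l) {f : α → ℝ} (hf : MemLp f 2 ρ) :
    ∃! p : Lp ℝ 2 μ × Lp ℝ 2 μI, p.1 ∈ U ∧ p.2 ∈ L ∧
      (∀ v ∈ U, nonlocalForm μ γ p.1 v + ∫ x, p.2 x * v x ∂μI = ∫ x, v x * f x ∂ρ) ∧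
      ∀ l ∈ L, ∫ x, p.1 x * l x ∂μI = 0 := by
  have : CompleteSpace U := hU.completeSpace_coe
  have : CompleteSpace L := hL.completeSpace_coe
  have hR : L ≤ U.map (lpRestrict hμI).toLinearMap := fun l hl => by
    obtain ⟨t, ht, htl⟩ := hext l hl
    exact ⟨t, ht, Lp.ext ((coeFn_lpRestrict hμI t).trans htl)⟩
  let F : Lp ℝ 2 μ →L[ℝ] ℝ := innerSL ℝ (hf.toLp f) ∘L lpRestrict hρ
  have hF (v : Lp ℝ 2 μ) : F v = ∫ x, v x * f x ∂ρ := inner_toLp_lpRestrict hρ hf v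
  have hsaddle := existsUnique_saddlePoint_of_le_map U L (A := nonlocalFormL hγ) hR hc
    (by simpa only [nonlocalFormL_apply, inner_lpRestrict_left] using hcoer) F
  simpa only [nonlocalFormL_apply, inner_lpRestrict_left, inner_lpRestrict_right, hF] using hsaddle

end NonlocalForm

theorem stmt9 {n : ℕ} (Ω ΩI : Set (EuclideanSpace ℝ (Fin n)))
    (hΩmeas : MeasurableSet Ω) (hΩImeas : MeasurableSet ΩI)
    (hdisj : Disjoint Ω ΩI)
    (hΩbdd : Bornology.IsBounded Ω) (hΩIbdd : Bornology.IsBounded ΩI)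
    (hΩpos : 0 < volume Ω) (hΩIpos : 0 < volume ΩI)
    (γ : EuclideanSpace ℝ (Fin n) → EuclideanSpace ℝ (Fin n) → ℝ)
    (hγmeas : Measurable fun p : EuclideanSpace ℝ (Fin n) × EuclideanSpace ℝ (Fin n) => γ p.1 p.2)
    (hγnonneg : ∀ x y, 0 ≤ γ x y)
    (hγbdd : ∃ M, ∀ x y, γ x y ≤ M)
    (U : Submodule ℝ (Lp ℝ 2 (volume.restrict (Ω ∪ ΩI))))
    (hUclosed : IsClosed (U : Set (Lp ℝ 2 (volume.restrict (Ω ∪ ΩI)))))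
    (Λ : Submodule ℝ (Lp ℝ 2 (volume.restrict ΩI)))
    (hΛclosed : IsClosed (Λ : Set (Lp ℝ 2 (volume.restrict ΩI))))
    -- `Uc` is the subspace of elements of `U` orthogonal to `Λ` on `Ω_I`
    (Uc : Set (Lp ℝ 2 (volume.restrict (Ω ∪ ΩI))))
    (hUc : Uc = {u : Lp ℝ 2 (volume.restrict (Ω ∪ ΩI)) |
      u ∈ U ∧ ∀ l ∈ Λ, (∫ x in ΩI, u x * l x) = 0})
    -- (i) coercivity of `a` on `Uc`
    (c : ℝ) (hc : 0 < c)
    (hcoer : ∀ z ∈ Uc, aform (Ω ∪ ΩI) γ z z ≥ c * ‖z‖ ^ 2)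
    -- (ii) every λ ∈ Λ admits an extension λ̃ ∈ U with λ̃|_{Ω_I} = λ and β‖λ̃‖ ≤ ‖λ‖
    (β : ℝ) (hβ : 0 < β)
    (hext : ∀ l ∈ Λ, ∃ lt ∈ U,
      (∀ᵐ x ∂(volume.restrict ΩI), lt x = l x) ∧ β * ‖lt‖ ≤ ‖l‖)
    (f : EuclideanSpace ℝ (Fin n) → ℝ)
    (hf : MemLp f 2 (volume.restrict Ω)) :
    ∃! p : Lp ℝ 2 (volume.restrict (Ω ∪ ΩI)) × Lp ℝ 2 (volume.restrict ΩI),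
      p.1 ∈ U ∧ p.2 ∈ Λ ∧
      (∀ v ∈ U, aform (Ω ∪ ΩI) γ p.1 v + (∫ x in ΩI, p.2 x * v x) =
        ∫ x in Ω, v x * f x) ∧
      (∀ ν ∈ Λ, (∫ x in ΩI, p.1 x * ν x) = 0) := by
  subst hUc
  obtain ⟨M, hM⟩ := hγbdd
  have : IsFiniteMeasure (volume.restrict (Ω ∪ ΩI)) :=
    isFiniteMeasure_restrict.2 (hΩbdd.union hΩIbdd).measure_lt_top.ne
  have hγ : MemLp (uncurry γ) ∞
      ((volume.restrict (Ω ∪ ΩI)).prod (volume.restrict (Ω ∪ ΩI))) :=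
    memLp_top_of_bound hγmeas.aestronglyMeasurable M <| .of_forall fun z => by
      simpa [uncurry, abs_of_nonneg (hγnonneg _ _)] using hM z.1 z.2
  exact stmt9_general (Measure.restrict_mono_set volume Set.subset_union_right)
    (Measure.restrict_mono_set volume Set.subset_union_left) hγ hUclosed hΛclosed hc
    (fun z hzU hz => hcoer z ⟨hzU, hz⟩)
    (fun l hl => (hext l hl).imp fun _ ht => ⟨ht.1, ht.2.1⟩) hf
end
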